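/- arXiv:1910.10976 — 2 statements merged into one kernel-verified Lean document; each statement's English description precedes it below -/
import Mathlib

section
/- Let A ∈ ℝ^{m×n} have unit ℓ₂-norm columns and satisfy the RIP of order K+1 with constant δ ≤ 1/2. Let x ∈ ℝ^n be K-sparse with support S = supp(x), let S' be a proper subset of S, and set r = P_{S'}^⊥ A x. Then for every j ∈ {1,…,n} \ S, |⟨r, a_j⟩| / ‖P_{S'}^⊥ a_j‖₂ ≤ δ · ‖r‖₂² / ‖x_{S\S'}‖₂. -/
open Finset

noncomputable section

/-- The support of a vector as a `Finset`. -/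
def vsupp {n : ℕ} (x : Fin n → ℝ) : Finset (Fin n) :=
  Finset.univ.filter (fun i => x i ≠ 0)

/-- `A` satisfies the restricted isometry property of order `r` with constant `δ`. -/
def RIP {m n : ℕ} (A : Matrix (Fin m) (Fin n) ℝ) (r : ℕ) (δ : ℝ) : Prop :=
  ∀ x : Fin n → ℝ, (vsupp x).card ≤ r →
    (1 - δ) * (∑ i, x i ^ 2) ≤ (∑ i, (A.mulVec x) i ^ 2) ∧
      (∑ i, (A.mulVec x) i ^ 2) ≤ (1 + δ) * (∑ i, x i ^ 2)

/-- The `j`-th column of `A`. -/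
def col {m n : ℕ} (A : Matrix (Fin m) (Fin n) ℝ) (j : Fin n) : Fin m → ℝ :=
  fun i => A i j

/-- Euclidean dot product. -/
def dot {m : ℕ} (u v : Fin m → ℝ) : ℝ := ∑ i, u i * v i

/-- Squared Euclidean norm. -/
def nsq {m : ℕ} (v : Fin m → ℝ) : ℝ := ∑ i, v i ^ 2

/-- Euclidean norm. -/
def enorm {m : ℕ} (v : Fin m → ℝ) : ℝ := Real.sqrt (nsq v)

/-- Squared norm of the restriction of `x` to `T`. -/
def rsq {n : ℕ} (x : Fin n → ℝ) (T : Finset (Fin n)) : ℝ := ∑ i ∈ T, x i ^ 2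

/-- Norm of the restriction of `x` to `T`. -/
def rnorm {n : ℕ} (x : Fin n → ℝ) (T : Finset (Fin n)) : ℝ := Real.sqrt (rsq x T)

/-- Span of the columns of `A` indexed by `J`. -/
def colSpan {m n : ℕ} (A : Matrix (Fin m) (Fin n) ℝ) (J : Finset (Fin n)) :
    Submodule ℝ (EuclideanSpace ℝ (Fin m)) :=
  Submodule.span ℝ ((fun j => (WithLp.equiv 2 (Fin m → ℝ)).symm (col A j)) '' (J : Set (Fin n)))

/-- The projection `P_J^⊥ v` of `v` onto the orthogonal complement of the span of the
columns of `A` indexed by `J`. -/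
def projPerp {m n : ℕ} (A : Matrix (Fin m) (Fin n) ℝ) (J : Finset (Fin n)) (v : Fin m → ℝ) :
    Fin m → ℝ :=
  v - WithLp.equiv 2 (Fin m → ℝ)
    ((Submodule.orthogonalProjection (colSpan A J) ((WithLp.equiv 2 (Fin m → ℝ)).symm v) :
      EuclideanSpace ℝ (Fin m)))

/-- The OLS selection criterion value for index `j`, given measurements `y` and current
estimated support `Sk`. -/
def olsQuot {m n : ℕ} (A : Matrix (Fin m) (Fin n) ℝ) (y : Fin m → ℝ) (Sk : Finset (Fin n))
    (j : Fin n) : ℝ :=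
  |dot (projPerp A Sk y) (col A j)| / _root_.enorm (projPerp A Sk (col A j))

/-- The estimated support of OLS after `k` iterations (ties broken towards smaller index). -/
def olsSupp {m n : ℕ} (A : Matrix (Fin m) (Fin n) ℝ) (y : Fin m → ℝ) : ℕ → Finset (Fin n)
  | 0 => ∅
  | k + 1 =>
    let Sk := olsSupp A y k
    let cand := (Finset.univ \ Sk).filter
      (fun j => ∀ i ∈ Finset.univ \ Sk, olsQuot A y Sk i ≤ olsQuot A y Sk j)
    if h : cand.Nonempty then insert (cand.min' h) Sk else Sk

/-- The constant `C_K` from the paper. -/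
def CK (K : ℕ) : ℝ :=
  if K = 1 then 1 else if K = 2 then 2/3 else if K = 3 then 4/7 else 1 / Real.sqrt K

/-!
On vectors vanishing on `S'`, the operator `L = P_{S'}^⊥ A` inherits the restricted isometry bounds
of `A`: projecting only decreases the norm, and `P_{S'}^⊥ A u = A (u - w)` for some `w` supported on
`S'`, where `‖u - w‖ ≥ ‖u‖`. Here `r = L z` with `z = x_{S \ S'}`, and `P_{S'}^⊥ a_j = L e_j`, where
`e_j ⊥ z`. So `u = L z / ‖z‖` and `v = L e_j` satisfy
`(1 - δ) (s² + t²) ≤ ‖s u + t v‖² ≤ (1 + δ) (s² + t²)` for all `s`, `t`. With `p = ‖u‖²` and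
`q = ‖v‖² ≤ 1`, the discriminants of the two quadratic forms bound `⟪u, v⟫²` by
`(p - (1 - δ)) (q - (1 - δ))` and by `(1 + δ - p) (1 + δ - q)`, and elementary algebra turns these
into `⟪u, v⟫² ≤ δ² p² q`.
-/

open WithLp
open scoped RealInnerProductSpace

section ScalarInequalities

variable {δ p q g : ℝ}

-- The two bounds on `g` agree at `q = 2 - p`, where their minimum divided by `q` is largest.
theorem mul_two_sub_le_of_le_mul (hδ : δ ≤ 1) (hp : 1 - δ ≤ p) (hp' : p ≤ 1 + δ)
    (hlower : g ≤ (p - (1 - δ)) * (q - (1 - δ))) (hupper : g ≤ (1 + δ - p) * (1 + δ - q)) :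
    g * (2 - p) ≤ (p - (1 - δ)) * (1 + δ - p) * q := by
  have hp2 : 0 ≤ 2 - p := by linarith
  rcases le_total q (2 - p) with hq | hq
  · calc g * (2 - p) ≤ (p - (1 - δ)) * (q - (1 - δ)) * (2 - p) := by gcongr
      _ = (p - (1 - δ)) * (1 + δ - p) * q - (p - (1 - δ)) * ((1 - δ) * (2 - p - q)) := by ring
      _ ≤ (p - (1 - δ)) * (1 + δ - p) * q :=
        sub_le_self _ (mul_nonneg (by linarith) (mul_nonneg (by linarith) (by linarith)))
  · calc g * (2 - p) ≤ (1 + δ - p) * (1 + δ - q) * (2 - p) := by gcongr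
      _ = (p - (1 - δ)) * (1 + δ - p) * q - (1 + δ - p) * ((1 + δ) * (q - (2 - p))) := by ring
      _ ≤ (p - (1 - δ)) * (1 + δ - p) * q :=
        sub_le_self _ (mul_nonneg (by linarith) (mul_nonneg (by linarith) (by linarith)))

theorem mul_sub_le_sq_mul_two_sub (hδ : δ ≤ 1) (hp : 1 ≤ p) (hp' : p ≤ 1 + δ) :
    (p - (1 - δ)) * (1 + δ - p) ≤ δ ^ 2 * p ^ 2 * (2 - p) := by
  have hδ0 : 0 ≤ δ := by linarith
  have hδsq : 0 ≤ 1 - δ ^ 2 := sub_nonneg.2 (pow_le_one₀ hδ0 hδ)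
  have hp2 : 0 ≤ 2 - p := by linarith
  calc (p - (1 - δ)) * (1 + δ - p)
      = δ ^ 2 * p ^ 2 * (2 - p) -
          ((p - 1) ^ 2 * (1 - δ ^ 2) + δ ^ 2 * ((p - 1) * p * (2 - p))) := by ring
    _ ≤ δ ^ 2 * p ^ 2 * (2 - p) := sub_le_self _ (by positivity)

theorem le_sq_mul_sq_mul_of_le_mul (hδ : δ ≤ 1 / 2) (hp : 1 - δ ≤ p) (hp' : p ≤ 1 + δ)
    (hq : 1 - δ ≤ q) (hq1 : q ≤ 1)
    (hlower : g ≤ (p - (1 - δ)) * (q - (1 - δ))) (hupper : g ≤ (1 + δ - p) * (1 + δ - q)) :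
    g ≤ δ ^ 2 * p ^ 2 * q := by
  have hδ0 : 0 ≤ δ := by linarith
  have hδ1 : δ ≤ 1 := by linarith
  rcases le_total p 1 with hp1 | hp1
  · have hp_sub : p - (1 - δ) ≤ δ * p ^ 2 := by
      have hfactor : 0 ≤ (1 - p) * (1 - δ * (1 + p)) :=
        mul_nonneg (by linarith) (by nlinarith)
      linarith
    have hq_sub : q - (1 - δ) ≤ δ * q := by
      have hfactor : 0 ≤ (1 - δ) * (1 - q) := mul_nonneg (by linarith) (by linarith)
      linarith
    calc g ≤ (p - (1 - δ)) * (q - (1 - δ)) := hlower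
      _ ≤ δ * p ^ 2 * (δ * q) := mul_le_mul hp_sub hq_sub (by linarith) (by positivity)
      _ = δ ^ 2 * p ^ 2 * q := by ring
  · have hp2 : 0 < 2 - p := by linarith
    have hq0 : 0 ≤ q := by linarith
    refine le_of_mul_le_mul_right ?_ hp2
    calc g * (2 - p) ≤ (p - (1 - δ)) * (1 + δ - p) * q :=
          mul_two_sub_le_of_le_mul hδ1 hp hp' hlower hupper
      _ ≤ δ ^ 2 * p ^ 2 * (2 - p) * q := 
          mul_le_mul_of_nonneg_right (mul_sub_le_sq_mul_two_sub hδ1 hp1 hp') hq0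
      _ = δ ^ 2 * p ^ 2 * q * (2 - p) := by ring

theorem sq_le_mul_of_forall_quadratic_nonneg {a b c : ℝ}
    (h : ∀ t : ℝ, 0 ≤ a + 2 * b * t + c * t ^ 2) : b ^ 2 ≤ a * c := by
  have hdiscrim : discrim c (2 * b) a ≤ 0 := discrim_le_zero fun t => by linarith [h t]
  rw [discrim] at hdiscrim
  linarith

end ScalarInequalities

section InnerProductSpace

variable {E F : Type*} [NormedAddCommGroup E] [InnerProductSpace ℝ E]
  [NormedAddCommGroup F] [InnerProductSpace ℝ F]

theorem norm_add_smul_sq_real (u v : E) (t : ℝ) :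
    ‖u + t • v‖ ^ 2 = ‖u‖ ^ 2 + 2 * ⟪u, v⟫ * t + ‖v‖ ^ 2 * t ^ 2 := by
  rw [norm_add_sq_real, real_inner_smul_right, norm_smul, mul_pow, Real.norm_eq_abs, sq_abs]
  ring

theorem real_inner_sq_le_of_le_norm_add_smul_sq {u v : E} {α : ℝ}
    (h : ∀ t : ℝ, α * (1 + t ^ 2) ≤ ‖u + t • v‖ ^ 2) :
    ⟪u, v⟫ ^ 2 ≤ (‖u‖ ^ 2 - α) * (‖v‖ ^ 2 - α) :=
  sq_le_mul_of_forall_quadratic_nonneg fun t => by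
    linarith [h t, norm_add_smul_sq_real u v t]

theorem real_inner_sq_le_of_norm_add_smul_sq_le {u v : E} {β : ℝ}
    (h : ∀ t : ℝ, ‖u + t • v‖ ^ 2 ≤ β * (1 + t ^ 2)) :
    ⟪u, v⟫ ^ 2 ≤ (β - ‖u‖ ^ 2) * (β - ‖v‖ ^ 2) := by
  rw [← neg_sq]
  exact sq_le_mul_of_forall_quadratic_nonneg fun t => by
    linarith [h t, norm_add_smul_sq_real u v t]

theorem abs_real_inner_le_of_norm_smul_add_smul_sq {u v : E} {δ : ℝ} (hδ : δ ≤ 1 / 2)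
    (hv : ‖v‖ ≤ 1)
    (hlower : ∀ s t : ℝ, (1 - δ) * (s ^ 2 + t ^ 2) ≤ ‖s • u + t • v‖ ^ 2)
    (hupper : ∀ s t : ℝ, ‖s • u + t • v‖ ^ 2 ≤ (1 + δ) * (s ^ 2 + t ^ 2)) :
    |⟪u, v⟫| ≤ δ * ‖u‖ ^ 2 * ‖v‖ := by
  have hu_lower : 1 - δ ≤ ‖u‖ ^ 2 := by simpa using hlower 1 0
  have hu_upper : ‖u‖ ^ 2 ≤ 1 + δ := by simpa using hupper 1 0
  have hv_lower : 1 - δ ≤ ‖v‖ ^ 2 := by simpa using hlower 0 1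
  have hδ0 : 0 ≤ δ := by linarith
  have hinner : ⟪u, v⟫ ^ 2 ≤ δ ^ 2 * (‖u‖ ^ 2) ^ 2 * ‖v‖ ^ 2 :=
    le_sq_mul_sq_mul_of_le_mul hδ hu_lower hu_upper hv_lower (pow_le_one₀ (norm_nonneg v) hv)
      (real_inner_sq_le_of_le_norm_add_smul_sq fun t => by simpa using hlower 1 t)
      (real_inner_sq_le_of_norm_add_smul_sq_le fun t => by simpa using hupper 1 t)
  refine abs_le_of_sq_le_sq (hinner.trans_eq ?_) (by positivity)
  ring

theorem abs_real_inner_map_mul_norm_le_of_inner_eq_zero {L : F →ₗ[ℝ] E} {z w : F} {δ : ℝ}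
    (hδ : δ ≤ 1 / 2) (hzw : ⟪z, w⟫ = 0) (hLw : ‖L w‖ ≤ ‖w‖)
    (hL : ∀ s t : ℝ, (1 - δ) * ‖s • z + t • w‖ ^ 2 ≤ ‖L (s • z + t • w)‖ ^ 2 ∧
      ‖L (s • z + t • w)‖ ^ 2 ≤ (1 + δ) * ‖s • z + t • w‖ ^ 2) :
    |⟪L z, L w⟫| * ‖z‖ ≤ δ * ‖L z‖ ^ 2 * ‖L w‖ := by
  rcases eq_or_ne z 0 with rfl | hz
  · simp
  rcases eq_or_ne w 0 with rfl | hw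
  · simp
  have hz0 : 0 < ‖z‖ := norm_pos_iff.2 hz
  have hw0 : 0 < ‖w‖ := norm_pos_iff.2 hw
  have hnorm (s t : ℝ) : ‖(s * ‖z‖⁻¹) • z + (t * ‖w‖⁻¹) • w‖ ^ 2 = s ^ 2 + t ^ 2 := by
    rw [norm_add_smul_sq_real, real_inner_smul_left, hzw, norm_smul, mul_pow, Real.norm_eq_abs,
      sq_abs]
    field_simp
    ring
  have hmap (s t : ℝ) : s • ‖z‖⁻¹ • L z + t • ‖w‖⁻¹ • L w =
      L ((s * ‖z‖⁻¹) • z + (t * ‖w‖⁻¹) • w) := by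
    simp only [map_add, map_smul, mul_smul]
  have hunit : |⟪‖z‖⁻¹ • L z, ‖w‖⁻¹ • L w⟫| ≤ δ * ‖‖z‖⁻¹ • L z‖ ^ 2 * ‖‖w‖⁻¹ • L w‖ := by
    refine abs_real_inner_le_of_norm_smul_add_smul_sq hδ ?_ (fun s t => ?_) fun s t => ?_
    · rw [norm_smul, norm_inv, norm_norm]
      exact inv_mul_le_one_of_le₀ hLw hw0.le
    · rw [hmap, ← hnorm]
      exact (hL _ _).1
    · rw [hmap, ← hnorm]
      exact (hL _ _).2
  rw [real_inner_smul_left, real_inner_smul_right, abs_mul, abs_mul, norm_smul, norm_smul,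
    norm_inv, norm_inv, norm_norm, norm_norm, abs_of_pos (inv_pos.2 hz0),
    abs_of_pos (inv_pos.2 hw0)] at hunit
  field_simp at hunit
  linarith

end InnerProductSpace

section EuclideanTranslation

variable {m n : ℕ}

theorem dot_eq_inner_toLp (u v : Fin m → ℝ) : dot u v = ⟪toLp 2 u, toLp 2 v⟫ := by
  simp [dot, PiLp.inner_apply, mul_comm]

theorem nsq_eq_norm_toLp_sq (v : Fin m → ℝ) : nsq v = ‖toLp 2 v‖ ^ 2 := by
  simp [nsq, EuclideanSpace.real_norm_sq_eq]

theorem enorm_eq_norm_toLp (v : Fin m → ℝ) : _root_.enorm v = ‖toLp 2 v‖ := by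
  rw [_root_.enorm, nsq_eq_norm_toLp_sq, Real.sqrt_sq (norm_nonneg _)]

theorem mem_vsupp {x : Fin n → ℝ} {i : Fin n} : i ∈ vsupp x ↔ x i ≠ 0 := by
  simp [vsupp]

theorem vsupp_subset_iff {x : Fin n → ℝ} {T : Finset (Fin n)} :
    vsupp x ⊆ T ↔ ∀ i ∉ T, x i = 0 := by
  simp only [Finset.subset_iff, mem_vsupp, ne_eq, not_imp_comm]

theorem rnorm_vsupp_sdiff (x : Fin n → ℝ) (J : Finset (Fin n)) :
    rnorm x (vsupp x \ J) = ‖toLp 2 (J.piecewise 0 x)‖ := by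
  rw [← enorm_eq_norm_toLp, rnorm, _root_.enorm, rsq, nsq]
  congr 1
  refine Finset.sum_subset_zero_on_sdiff (Finset.subset_univ _) (fun i hi => ?_) fun i hi => ?_
  · by_cases hiJ : i ∈ J <;> simp_all [mem_vsupp]
  · simp_all

theorem norm_toLp_piecewise_zero_pos {x : Fin n → ℝ} {J : Finset (Fin n)}
    (hx : ¬ vsupp x ⊆ J) : 0 < ‖toLp 2 (J.piecewise 0 x)‖ := by
  obtain ⟨i, hix, hiJ⟩ := Finset.not_subset.1 hx
  refine norm_pos_iff.2 fun hzero => mem_vsupp.1 hix ?_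
  simpa [hiJ] using congr_arg (· i) hzero

theorem RIP.norm_sq_bounds {A : Matrix (Fin m) (Fin n) ℝ} {k : ℕ} {δ : ℝ} (hA : RIP A k δ)
    {u : EuclideanSpace ℝ (Fin n)} (hu : (vsupp u).card ≤ k) :
    (1 - δ) * ‖u‖ ^ 2 ≤ ‖A.toEuclideanLin u‖ ^ 2 ∧
      ‖A.toEuclideanLin u‖ ^ 2 ≤ (1 + δ) * ‖u‖ ^ 2 := by
  simpa only [EuclideanSpace.real_norm_sq_eq, Matrix.toLpLin_apply] using hA u hu

end EuclideanTranslation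

section ProjectedMatrix

variable {m n : ℕ} (A : Matrix (Fin m) (Fin n) ℝ) (J : Finset (Fin n))

/-- The operator `P_J^⊥ A`, as a linear map between Euclidean spaces so that norms and inner
products of its values are available. -/
def projectedLin : EuclideanSpace ℝ (Fin n) →ₗ[ℝ] EuclideanSpace ℝ (Fin m) :=
  (colSpan A J)ᗮ.starProjection.toLinearMap ∘ₗ A.toEuclideanLin

theorem projectedLin_apply (u : EuclideanSpace ℝ (Fin n)) :
    projectedLin A J u = (colSpan A J)ᗮ.starProjection (A.toEuclideanLin u) :=
  rfl

theorem toLp_projPerp (v : Fin m → ℝ) :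
    toLp 2 (projPerp A J v) = (colSpan A J)ᗮ.starProjection (toLp 2 v) := by
  rw [Submodule.starProjection_orthogonal_val]
  rfl

theorem toLp_projPerp_mulVec (x : Fin n → ℝ) :
    toLp 2 (projPerp A J (A.mulVec x)) = projectedLin A J (toLp 2 x) :=
  toLp_projPerp A J _

theorem toLp_col (j : Fin n) :
    toLp 2 (col A j) = A.toEuclideanLin (EuclideanSpace.single j 1) := by
  ext i
  simp [col]

theorem toLp_projPerp_col (j : Fin n) :
    toLp 2 (projPerp A J (col A j)) = projectedLin A J (EuclideanSpace.single j 1) := by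
  rw [toLp_projPerp, toLp_col, projectedLin_apply]

theorem inner_projectedLin_toEuclideanLin (u w : EuclideanSpace ℝ (Fin n)) :
    ⟪projectedLin A J u, A.toEuclideanLin w⟫ = ⟪projectedLin A J u, projectedLin A J w⟫ := by
  simp only [projectedLin_apply, ← Submodule.inner_starProjection_left_eq_right,
    (Submodule.isIdempotentElem_starProjection _).eq, ← mul_apply_eq_comp]

theorem norm_projectedLin_le (u : EuclideanSpace ℝ (Fin n)) :
    ‖projectedLin A J u‖ ≤ ‖A.toEuclideanLin u‖ :=
  Submodule.norm_starProjection_apply_le _ _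

variable {A J}

theorem norm_projectedLin_single_le_one {j : Fin n} (hcol : nsq (col A j) ≤ 1) :
    ‖projectedLin A J (EuclideanSpace.single j 1)‖ ≤ 1 := by
  refine (norm_projectedLin_le A J _).trans ?_
  rwa [← toLp_col, ← sq_le_one_iff₀ (norm_nonneg _), ← nsq_eq_norm_toLp_sq]

theorem mem_span_basisFun_image_iff {w : EuclideanSpace ℝ (Fin n)} :
    w ∈ Submodule.span ℝ ((EuclideanSpace.basisFun (Fin n) ℝ).toBasis '' (J : Set (Fin n))) ↔
      vsupp w ⊆ J := by
  rw [Module.Basis.mem_span_image, Finset.coe_subset]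
  congr!
  ext i
  simp [mem_vsupp]

theorem mem_colSpan_iff {v : EuclideanSpace ℝ (Fin m)} :
    v ∈ colSpan A J ↔
      ∃ w : EuclideanSpace ℝ (Fin n), vsupp w ⊆ J ∧ A.toEuclideanLin w = v := by
  have hmap : colSpan A J = (Submodule.span ℝ ((EuclideanSpace.basisFun (Fin n) ℝ).toBasis ''
      (J : Set (Fin n)))).map A.toEuclideanLin := by
    rw [Submodule.map_span, ← Set.image_comp, colSpan]
    congr 2
    ext1 j
    simpa using toLp_col A j
  simp only [hmap, Submodule.mem_map, mem_span_basisFun_image_iff]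

theorem projectedLin_eq_zero {w : EuclideanSpace ℝ (Fin n)} (hw : vsupp w ⊆ J) :
    projectedLin A J w = 0 :=
  Submodule.starProjection_orthogonal_apply_eq_zero (mem_colSpan_iff.2 ⟨w, hw, rfl⟩)

theorem projectedLin_toLp_piecewise_zero (x : Fin n → ℝ) :
    projectedLin A J (toLp 2 (J.piecewise 0 x)) = projectedLin A J (toLp 2 x) := by
  rw [← sub_eq_zero, ← map_sub]
  refine projectedLin_eq_zero (vsupp_subset_iff.2 fun i hi => ?_)
  simp [hi]

theorem exists_projectedLin_eq_toEuclideanLin_sub (u : EuclideanSpace ℝ (Fin n)) :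
    ∃ w : EuclideanSpace ℝ (Fin n), vsupp w ⊆ J ∧
      projectedLin A J u = A.toEuclideanLin (u - w) := by
  obtain ⟨w, hw, hAw⟩ := mem_colSpan_iff.1
    ((colSpan A J).starProjection_apply_mem (A.toEuclideanLin u))
  exact ⟨w, hw, by rw [projectedLin_apply, Submodule.starProjection_orthogonal_val, map_sub, hAw]⟩

theorem norm_sq_le_norm_sub_sq_of_vsupp_subset {u w : EuclideanSpace ℝ (Fin n)}
    (hu : ∀ i ∈ J, u i = 0) (hw : vsupp w ⊆ J) : ‖u‖ ^ 2 ≤ ‖u - w‖ ^ 2 := by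
  simp only [EuclideanSpace.real_norm_sq_eq]
  refine Finset.sum_le_sum fun i _ => ?_
  by_cases hi : i ∈ J
  · simpa [hu i hi] using sq_nonneg (w i)
  · simp [vsupp_subset_iff.1 hw i hi]

theorem RIP.norm_projectedLin_sq_bounds {k : ℕ} {δ : ℝ} (hA : RIP A k δ) (hδ : δ ≤ 1)
    {T : Finset (Fin n)} (hT : T.card ≤ k) (hJT : J ⊆ T) {u : EuclideanSpace ℝ (Fin n)}
    (huT : vsupp u ⊆ T) (huJ : ∀ i ∈ J, u i = 0) :
    (1 - δ) * ‖u‖ ^ 2 ≤ ‖projectedLin A J u‖ ^ 2 ∧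
      ‖projectedLin A J u‖ ^ 2 ≤ (1 + δ) * ‖u‖ ^ 2 := by
  constructor
  · obtain ⟨w, hw, hLu⟩ := exists_projectedLin_eq_toEuclideanLin_sub (A := A) (J := J) u
    have hsub : vsupp (u - w) ⊆ T := vsupp_subset_iff.2 fun i hi => by
      simp [vsupp_subset_iff.1 huT i hi, vsupp_subset_iff.1 (hw.trans hJT) i hi]
    calc (1 - δ) * ‖u‖ ^ 2 ≤ (1 - δ) * ‖u - w‖ ^ 2 :=
          mul_le_mul_of_nonneg_left (norm_sq_le_norm_sub_sq_of_vsupp_subset huJ hw) (by linarith)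
      _ ≤ ‖A.toEuclideanLin (u - w)‖ ^ 2 :=
          (hA.norm_sq_bounds ((Finset.card_le_card hsub).trans hT)).1
      _ = ‖projectedLin A J u‖ ^ 2 := by rw [hLu]
  · calc ‖projectedLin A J u‖ ^ 2 ≤ ‖A.toEuclideanLin u‖ ^ 2 := by
          gcongr
          exact norm_projectedLin_le A J u
      _ ≤ (1 + δ) * ‖u‖ ^ 2 := (hA.norm_sq_bounds ((Finset.card_le_card huT).trans hT)).2

theorem RIP.norm_projectedLin_smul_add_smul_sq_bounds {k : ℕ} {δ : ℝ} (hA : RIP A k δ)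
    (hδ : δ ≤ 1) {x : Fin n → ℝ} (hk : (vsupp x ∪ J).card < k) {j : Fin n} (hj : j ∉ J)
    (s t : ℝ) :
    (1 - δ) * ‖s • toLp 2 (J.piecewise 0 x) + t • EuclideanSpace.single j 1‖ ^ 2 ≤
        ‖projectedLin A J (s • toLp 2 (J.piecewise 0 x) + t • EuclideanSpace.single j 1)‖ ^ 2 ∧
      ‖projectedLin A J (s • toLp 2 (J.piecewise 0 x) + t • EuclideanSpace.single j 1)‖ ^ 2 ≤
        (1 + δ) * ‖s • toLp 2 (J.piecewise 0 x) + t • EuclideanSpace.single j 1‖ ^ 2 :=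
  hA.norm_projectedLin_sq_bounds hδ ((Finset.card_insert_le j _).trans hk)
    (Finset.subset_union_right.trans (Finset.subset_insert _ _))
    (vsupp_subset_iff.2 fun i hi => by simp_all [mem_vsupp])
    fun i hi => by simp [hi, ne_of_mem_of_not_mem hi hj]

end ProjectedMatrix

theorem stmt1_general {m n k : ℕ} (A : Matrix (Fin m) (Fin n) ℝ) (δ : ℝ) (hδ : δ ≤ 1 / 2)
    (hRIP : RIP A k δ) (x : Fin n → ℝ) (J : Finset (Fin n)) (hx : ¬ vsupp x ⊆ J)
    (hk : (vsupp x ∪ J).card < k) (j : Fin n) (hj : j ∉ vsupp x ∪ J) (hcol : nsq (col A j) ≤ 1) :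
    |dot (projPerp A J (A.mulVec x)) (col A j)| / _root_.enorm (projPerp A J (col A j)) ≤
      δ * nsq (projPerp A J (A.mulVec x)) / rnorm x (vsupp x \ J) := by
  obtain ⟨hxj, hjJ⟩ : x j = 0 ∧ j ∉ J := by simpa [mem_vsupp] using hj
  set z : EuclideanSpace ℝ (Fin n) := toLp 2 (J.piecewise 0 x) with hz
  set e : EuclideanSpace ℝ (Fin n) := EuclideanSpace.single j 1 with he
  have hze : ⟪z, e⟫ = 0 := by simp [hz, he, hxj, hjJ, EuclideanSpace.inner_single_right]
  have hz0 : 0 < ‖z‖ := norm_toLp_piecewise_zero_pos hx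
  have hL := hRIP.norm_projectedLin_smul_add_smul_sq_bounds (by linarith) hk hjJ
  have hLe : ‖projectedLin A J e‖ ≤ ‖e‖ := by
    simpa [he] using norm_projectedLin_single_le_one hcol
  have hLe0 : 0 < ‖projectedLin A J e‖ := by
    have hlower : 1 - δ ≤ ‖projectedLin A J e‖ ^ 2 := by simpa [he] using (hL 0 1).1
    exact (norm_nonneg _).lt_of_ne' (sq_pos_iff.1 (by linarith))
  rw [dot_eq_inner_toLp, nsq_eq_norm_toLp_sq, enorm_eq_norm_toLp, rnorm_vsupp_sdiff,
    toLp_projPerp_mulVec, toLp_projPerp_col, toLp_col, inner_projectedLin_toEuclideanLin,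
    ← projectedLin_toLp_piecewise_zero, div_le_div_iff₀ hLe0 hz0]
  exact abs_real_inner_map_mul_norm_le_of_inner_eq_zero hδ hze hLe hL

/-- under unit-norm columns and RIP of order `K+1` with `δ ≤ 1/2`,
for every `j ∉ S`, `|⟨r, a_j⟩| / ‖P_{S'}^⊥ a_j‖₂ ≤ δ ‖r‖₂² / ‖x_{S\S'}‖₂`. -/
theorem stmt1 {m n K : ℕ} (A : Matrix (Fin m) (Fin n) ℝ) (δ : ℝ)
    (hδ0 : 0 ≤ δ) (hδ : δ ≤ 1 / 2)
    (hcols : ∀ j, nsq (col A j) = 1)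
    (hRIP : RIP A (K + 1) δ)
    (x : Fin n → ℝ) (S : Finset (Fin n)) (hS : vsupp x = S) (hK : S.card ≤ K)
    (S' : Finset (Fin n)) (hS' : S' ⊂ S)
    (r : Fin m → ℝ) (hr : r = projPerp A S' (A.mulVec x))
    (j : Fin n) (hj : j ∉ S) :
    |dot r (col A j)| / _root_.enorm (projPerp A S' (col A j)) ≤ δ * nsq r / rnorm x (S \ S') := by
  subst hr hS
  have hunion : vsupp x ∪ S' = vsupp x := Finset.union_eq_left.2 hS'.subset
  exact stmt1_general A δ hδ hRIP x S' hS'.not_subset (by rw [hunion]; omega) j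
    (by rwa [hunion]) (hcols j).le
end
end

section
/- Let δ ∈ [2/3, 1) and let A ∈ ℝ^{m×3} be any matrix with AᵀA = G, where G is the 3×3 matrix with unit diagonal, G₁₂ = G₁₃ = δ/2, and G₂₃ = −δ/2 (such A exists since G is positive semidefinite). Then: (a) every column of A has unit ℓ₂-norm; (b) A satisfies the RIP of order 3 with constant δ, and every δ' ∈ [0,1) with which A satisfies the RIP of order 3 satisfies δ' ≥ δ; and (c) for the 2-sparse vector x = (0, 1, 1)ᵀ and y = A x, one has |⟨y, a_1⟩| = δ, |⟨y, a_2⟩| = |⟨y, a_3⟩| = 1 − δ/2, and δ ≥ 1 − δ/2, so the incorrect index 1 attains the maximum of j ↦ |⟨y, a_j⟩|. -/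
open Finset

noncomputable section

/-!
Everything in the theorem depends on `A` only through its Gram matrix `G = AᵀA`. The eigenvalues of
`G` are `1 - δ`, with eigenvector `(-1, 1, 1)`, and `1 + δ / 2`, twice. Hence `δ` is a RIP constant,
and testing the RIP on this eigenvector shows that no smaller constant works. The correlations
`⟨A x, a_j⟩` are the entries of `G x`, and for `x = (0, 1, 1)` one has
`G x = (δ, 1 - δ / 2, 1 - δ / 2)`.
-/

section Gram

open scoped Matrix

variable {m n r : ℕ} {A : Matrix (Fin m) (Fin n) ℝ} {δ μ : ℝ} {v : Fin n → ℝ}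

lemma nsq_eq_dotProduct_self (v : Fin n → ℝ) : nsq v = v ⬝ᵥ v :=
  Finset.sum_congr rfl fun i _ => sq (v i)

lemma nsq_pos (hv : v ≠ 0) : 0 < nsq v := by
  simpa [nsq_eq_dotProduct_self] using Matrix.dotProduct_self_star_pos_iff.mpr hv

lemma nsq_col (A : Matrix (Fin m) (Fin n) ℝ) (j : Fin n) : nsq (col A j) = (Aᵀ * A) j j :=
  nsq_eq_dotProduct_self (col A j)

lemma nsq_mulVec (A : Matrix (Fin m) (Fin n) ℝ) (x : Fin n → ℝ) :
    nsq (A *ᵥ x) = x ⬝ᵥ (Aᵀ * A) *ᵥ x := by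
  rw [nsq_eq_dotProduct_self, ← Matrix.mulVec_mulVec, Matrix.dotProduct_transpose_mulVec]

lemma dot_mulVec_col (A : Matrix (Fin m) (Fin n) ℝ) (x : Fin n → ℝ) (j : Fin n) :
    dot (A *ᵥ x) (col A j) = ((Aᵀ * A) *ᵥ x) j := by
  rw [← Matrix.mulVec_mulVec]
  exact dotProduct_comm (A *ᵥ x) (col A j)

lemma RIP.one_sub_le_of_gram_mulVec_eq_smul (hA : RIP A r δ) (hv : v ≠ 0)
    (hvr : (vsupp v).card ≤ r) (hμ : (Aᵀ * A) *ᵥ v = μ • v) : 1 - δ ≤ μ := by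
  have lower_bound : (1 - δ) * nsq v ≤ μ * nsq v :=
    calc (1 - δ) * nsq v ≤ nsq (A *ᵥ v) := (hA v hvr).1
      _ = μ * nsq v := by
        rw [nsq_mulVec, hμ, dotProduct_smul, nsq_eq_dotProduct_self, smul_eq_mul]
  exact le_of_mul_le_mul_right lower_bound (nsq_pos hv)

end Gram

/-- The Gram matrix `G` of the counterexample, with unit diagonal and off-diagonal entries
`± δ / 2`; the paper's indices `1, 2, 3` are `0, 1, 2` here. -/
def counterexampleGram (δ : ℝ) : Matrix (Fin 3) (Fin 3) ℝ :=
  !![1, δ / 2, δ / 2; δ / 2, 1, -(δ / 2); δ / 2, -(δ / 2), 1]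

section Counterexample

open scoped Matrix

variable {m r : ℕ} {A : Matrix (Fin m) (Fin 3) ℝ} {δ δ' : ℝ}

lemma counterexampleGram_apply_self (δ : ℝ) (j : Fin 3) : counterexampleGram δ j j = 1 := by
  fin_cases j <;> rfl

lemma counterexampleGram_mulVec (δ : ℝ) (x : Fin 3 → ℝ) :
    counterexampleGram δ *ᵥ x =
      ![x 0 + δ / 2 * (x 1 + x 2), x 1 + δ / 2 * (x 0 - x 2), x 2 + δ / 2 * (x 0 - x 1)] := by
  ext i
  fin_cases i <;>
    simp [counterexampleGram, Matrix.mulVec, dotProduct, Fin.sum_univ_three] <;> ring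

lemma dotProduct_counterexampleGram_mulVec (δ : ℝ) (x : Fin 3 → ℝ) :
    x ⬝ᵥ counterexampleGram δ *ᵥ x = nsq x + δ * (x 0 * x 1 + x 0 * x 2 - x 1 * x 2) := by
  simp only [counterexampleGram_mulVec, dotProduct, nsq, Fin.sum_univ_three, Matrix.cons_val]
  ring

lemma counterexampleGram_mulVec_neg_one_one_one (δ : ℝ) :
    counterexampleGram δ *ᵥ ![-1, 1, 1] = (1 - δ) • ![-1, 1, 1] := by
  rw [counterexampleGram_mulVec]
  ext i
  fin_cases i <;> simp <;> ring

lemma counterexampleGram_mulVec_zero_one_one (δ : ℝ) :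
    counterexampleGram δ *ᵥ ![0, 1, 1] = ![δ, 1 - δ / 2, 1 - δ / 2] := by
  rw [counterexampleGram_mulVec]
  ext i
  fin_cases i <;> simp <;> ring

lemma one_sub_mul_nsq_le_dotProduct_counterexampleGram_mulVec (hδ : 0 ≤ δ) (x : Fin 3 → ℝ) :
    (1 - δ) * nsq x ≤ x ⬝ᵥ counterexampleGram δ *ᵥ x := by
  have sum_of_squares : x ⬝ᵥ counterexampleGram δ *ᵥ x - (1 - δ) * nsq x =
      δ / 2 * ((x 0 + x 1) ^ 2 + (x 0 + x 2) ^ 2 + (x 1 - x 2) ^ 2) := by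
    rw [dotProduct_counterexampleGram_mulVec, nsq, Fin.sum_univ_three]
    ring
  rw [← sub_nonneg, sum_of_squares]
  positivity

lemma dotProduct_counterexampleGram_mulVec_le_one_add_mul_nsq (hδ : 0 ≤ δ) (x : Fin 3 → ℝ) :
    x ⬝ᵥ counterexampleGram δ *ᵥ x ≤ (1 + δ) * nsq x := by
  have sum_of_squares : (1 + δ) * nsq x - x ⬝ᵥ counterexampleGram δ *ᵥ x =
      δ / 2 * (x 0 ^ 2 + x 1 ^ 2 + x 2 ^ 2 + (x 1 + x 2 - x 0) ^ 2) := by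
    rw [dotProduct_counterexampleGram_mulVec, nsq, Fin.sum_univ_three]
    ring
  rw [← sub_nonneg, sum_of_squares]
  positivity

lemma rip_of_gram_eq_counterexampleGram (hA : Aᵀ * A = counterexampleGram δ) (hδ : 0 ≤ δ) (r : ℕ) :
    RIP A r δ := by
  intro x _
  change (1 - δ) * nsq x ≤ nsq (A *ᵥ x) ∧ nsq (A *ᵥ x) ≤ (1 + δ) * nsq x
  rw [nsq_mulVec, hA]
  exact ⟨one_sub_mul_nsq_le_dotProduct_counterexampleGram_mulVec hδ x,
    dotProduct_counterexampleGram_mulVec_le_one_add_mul_nsq hδ x⟩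

lemma RIP.le_of_gram_eq_counterexampleGram (hRIP : RIP A r δ')
    (hA : Aᵀ * A = counterexampleGram δ) (hr : 3 ≤ r) : δ ≤ δ' := by
  have eigenvector_ne_zero : (![-1, 1, 1] : Fin 3 → ℝ) ≠ 0 :=
    fun h => by simpa using congrFun h 1
  have eigenvector_sparse : (vsupp ![-1, 1, 1]).card ≤ r := (Finset.card_le_univ _).trans hr
  have one_sub_le : 1 - δ' ≤ 1 - δ :=
    hRIP.one_sub_le_of_gram_mulVec_eq_smul eigenvector_ne_zero eigenvector_sparse
      (hA ▸ counterexampleGram_mulVec_neg_one_one_one δ)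
  linarith

end Counterexample

/-- the `K = 2` counterexample. -/
theorem stmt13 {m : ℕ} (δ : ℝ) (hδ1 : 2 / 3 ≤ δ) (hδ2 : δ < 1)
    (A : Matrix (Fin m) (Fin 3) ℝ)
    (hA : A.transpose * A = !![1, δ/2, δ/2; δ/2, 1, -(δ/2); δ/2, -(δ/2), 1])
    (x : Fin 3 → ℝ) (hx : x = ![0, 1, 1])
    (y : Fin m → ℝ) (hy : y = A.mulVec x) :
    (∀ j, nsq (col A j) = 1) ∧
    RIP A 3 δ ∧
    (∀ δ' : ℝ, 0 ≤ δ' → δ' < 1 → RIP A 3 δ' → δ ≤ δ') ∧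
    |dot y (col A 0)| = δ ∧
    |dot y (col A 1)| = 1 - δ / 2 ∧
    |dot y (col A 2)| = 1 - δ / 2 ∧
    1 - δ / 2 ≤ δ ∧
    (∀ j, |dot y (col A j)| ≤ |dot y (col A 0)|) := by
  change A.transpose * A = counterexampleGram δ at hA
  have δ_nonneg : 0 ≤ δ := by linarith
  have one_sub_half_nonneg : 0 ≤ 1 - δ / 2 := by linarith
  have one_sub_half_le : 1 - δ / 2 ≤ δ := by linarith
  have abs_correlation (j : Fin 3) :
      |dot y (col A j)| = ![δ, 1 - δ / 2, 1 - δ / 2] j := by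
    rw [hy, hx, dot_mulVec_col, hA, counterexampleGram_mulVec_zero_one_one, abs_eq_self]
    fin_cases j
    exacts [δ_nonneg, one_sub_half_nonneg, one_sub_half_nonneg]
  refine ⟨fun j => ?_, rip_of_gram_eq_counterexampleGram hA δ_nonneg 3,
    fun δ' _ _ hRIP => hRIP.le_of_gram_eq_counterexampleGram hA le_rfl,
    abs_correlation 0, abs_correlation 1, abs_correlation 2, one_sub_half_le, fun j => ?_⟩
  · rw [nsq_col, hA, counterexampleGram_apply_self]
  · rw [abs_correlation, abs_correlation]
    fin_cases j
    exacts [le_rfl, one_sub_half_le, one_sub_half_le]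
end
end
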